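/- arXiv:2305.09896 — 4 statements merged into one kernel-verified Lean document; each statement's English description precedes it below -/
import Mathlib

section
/- Let (Ω, 𝔉, μ) be a probability space, let τ > 0, let h ∈ ℝ^d be a fixed vector, and let g : Ω → ℝ^d be a measurable random vector with ∫ ‖g(ω) − h‖₂² dμ(ω) ≤ s² for some s ≥ 0. Then ∫ ‖Clip_τ(g(ω)) − Clip_τ(h)‖₂ dμ(ω) ≤ 2s. -/
open MeasureTheory

theorem clip_aux {E : Type*} [NormedAddCommGroup E] [NormedSpace ℝ E] (τ : ℝ) (hτ : 0 < τ)
    (x y : E) : ‖(τ / (τ + ‖x‖)) • x - (τ / (τ + ‖y‖)) • y‖ ≤ 2 * ‖x - y‖ := by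
  have hx := norm_nonneg x
  have hy := norm_nonneg y
  have e : (τ / (τ + ‖x‖)) • x - (τ / (τ + ‖y‖)) • y
      = (τ / (τ + ‖x‖)) • (x - y) + (τ / (τ + ‖x‖) - τ / (τ + ‖y‖)) • y := by
    rw [smul_sub, sub_smul]; abel
  have h1 : ‖(τ / (τ + ‖x‖)) • (x - y)‖ ≤ ‖x - y‖ := by
    rw [norm_smul, Real.norm_of_nonneg (by positivity)]
    have : τ / (τ + ‖x‖) ≤ 1 := by
      rw [div_le_one (by positivity)]; linarith
    exact mul_le_of_le_one_left (norm_nonneg _) this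
  have h2 : ‖(τ / (τ + ‖x‖) - τ / (τ + ‖y‖)) • y‖ ≤ ‖x - y‖ := by
    have e2 : τ / (τ + ‖x‖) - τ / (τ + ‖y‖)
        = (τ / (τ + ‖x‖)) * (1 / (τ + ‖y‖)) * (‖y‖ - ‖x‖) := by
      field_simp; ring
    have h3 : |‖y‖ - ‖x‖| ≤ ‖x - y‖ := by
      rw [norm_sub_rev]; exact abs_norm_sub_norm_le y x
    have h4 : τ / (τ + ‖x‖) ≤ 1 := by
      rw [div_le_one (by positivity)]; linarith
    have h5 : 1 / (τ + ‖y‖) * ‖y‖ ≤ 1 := by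
      rw [one_div_mul_eq_div, div_le_one (by positivity)]; linarith
    have h6 : (τ / (τ + ‖x‖)) * (1 / (τ + ‖y‖) * ‖y‖) ≤ 1 :=
      mul_le_one₀ h4 (by positivity) h5
    rw [norm_smul, e2, Real.norm_eq_abs, abs_mul, abs_of_nonneg (by positivity)]
    calc _ = (τ / (τ + ‖x‖)) * (1 / (τ + ‖y‖) * ‖y‖) * |‖y‖ - ‖x‖| := by ring
      _ ≤ |‖y‖ - ‖x‖| := mul_le_of_le_one_left (abs_nonneg _) h6
      _ ≤ _ := h3
  rw [e]
  linarith [norm_add_le ((τ / (τ + ‖x‖)) • (x - y)) ((τ / (τ + ‖x‖) - τ / (τ + ‖y‖)) • y)]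

/-- Expected clipping error.
Let `(Ω, 𝔉, μ)` be a probability space, `τ > 0`, `h ∈ ℝ^d` a fixed vector, and
`g : Ω → ℝ^d` a measurable random vector with `∫ ‖g − h‖₂² dμ ≤ s²` for some
`s ≥ 0`. Then `∫ ‖Clip_τ(g) − Clip_τ(h)‖₂ dμ ≤ 2 s`, where
`Clip_τ(x) = (τ/(τ+‖x‖₂)) x`. -/
theorem expected_clipping_error
    {Ω : Type*} [MeasurableSpace Ω] (μ : Measure Ω) [IsProbabilityMeasure μ]
    {d : ℕ} (τ : ℝ) (hτ : 0 < τ) (h : EuclideanSpace ℝ (Fin d))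
    (g : Ω → EuclideanSpace ℝ (Fin d)) (hg : Measurable g)
    (s : ℝ) (hs : 0 ≤ s)
    (hint : Integrable (fun ω => ‖g ω - h‖ ^ 2) μ)
    (hvar : ∫ ω, ‖g ω - h‖ ^ 2 ∂μ ≤ s ^ 2) :
    ∫ ω, ‖(τ / (τ + ‖g ω‖)) • g ω - (τ / (τ + ‖h‖)) • h‖ ∂μ ≤ 2 * s := by
  have hX : Integrable (fun ω => ‖g ω - h‖) μ := by
    refine Integrable.mono' (hint.add (integrable_const (1 : ℝ)))
      (hg.sub_const h).norm.aestronglyMeasurable (Filter.Eventually.of_forall fun ω => ?_)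
    simp only [norm_norm, Pi.add_apply]
    nlinarith [sq_nonneg (‖g ω - h‖ - 1), norm_nonneg (g ω - h)]
  have hm : ∫ ω, ‖g ω - h‖ ∂μ ≤ s := by
    set m := ∫ ω, ‖g ω - h‖ ∂μ with hmdef
    have h0 : 2 * m * m - m ^ 2 ≤ ∫ ω, ‖g ω - h‖ ^ 2 ∂μ := by
      have : ∫ ω, (2 * m * ‖g ω - h‖ - m ^ 2) ∂μ = 2 * m * m - m ^ 2 := by
        rw [integral_sub (hX.const_mul _) (integrable_const _), integral_const_mul]
        simp [← hmdef]
      rw [← this]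
      refine integral_mono ((hX.const_mul _).sub (integrable_const _)) hint fun ω => ?_
      have := sq_nonneg (‖g ω - h‖ - m)
      simp only
      nlinarith
    exact abs_le_of_sq_le_sq' (a := m) (by nlinarith) hs |>.2
  calc _ ≤ ∫ ω, 2 * ‖g ω - h‖ ∂μ :=
        integral_mono_of_nonneg (Filter.Eventually.of_forall fun ω => norm_nonneg _)
          (hX.const_mul 2) (Filter.Eventually.of_forall fun ω => clip_aux τ hτ (g ω) h)
    _ = 2 * ∫ ω, ‖g ω - h‖ ∂μ := integral_const_mul _ _
    _ ≤ 2 * s := by linarith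
end

section
/- Let f₁, …, f_n : ℝ^d → ℝ be differentiable functions whose gradients are L-Lipschitz, let f = (1/n) Σᵢ fᵢ, and suppose the bounded gradient dissimilarity condition ‖∇f(x) − ∇fᵢ(x)‖₂ ≤ (1/12)‖∇f(x)‖₂ holds for all x ∈ ℝ^d and all i. Let τ > 0, let x₁, …, x_n ∈ ℝ^d, let x̄ = (1/n) Σᵢ xᵢ, and set δ = τ/(τ + ‖∇f(x̄)‖₂). Then (1/n) Σᵢ ‖(τ/(τ + ‖∇fᵢ(xᵢ)‖₂) − τ/(τ + ‖∇f(x̄)‖₂)) ∇fᵢ(xᵢ)‖₂ ≤ (δ L/√n) · (Σᵢ ‖xᵢ − x̄‖₂²)^{1/2} + (1/12) ‖∇f(x̄)‖₂. -/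
/-- Clipping-scale dissimilarity bound.
Let `f₁, …, f_n : ℝ^d → ℝ` be differentiable with `L`-Lipschitz gradients,
`F = (1/n) Σᵢ fᵢ`, and suppose `‖∇F(x) − ∇fᵢ(x)‖ ≤ (1/12) ‖∇F(x)‖` for all
`x` and `i`. For `τ > 0`, points `x₁, …, x_n` with average `x̄`, and
`δ = τ/(τ + ‖∇F(x̄)‖)`,
`(1/n) Σᵢ ‖(τ/(τ+‖∇fᵢ(xᵢ)‖) − τ/(τ+‖∇F(x̄)‖)) ∇fᵢ(xᵢ)‖
   ≤ (δL/√n) (Σᵢ ‖xᵢ − x̄‖²)^{1/2} + (1/12) ‖∇F(x̄)‖`. -/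
theorem clipping_dissimilarity_bound {d n : ℕ} (hn : 0 < n)
    (L τ : ℝ) (hL : 0 ≤ L) (hτ : 0 < τ)
    (f : Fin n → EuclideanSpace ℝ (Fin d) → ℝ)
    (hdiff : ∀ i, Differentiable ℝ (f i))
    (hlip : ∀ i x y, ‖gradient (f i) x - gradient (f i) y‖ ≤ L * ‖x - y‖)
    (F : EuclideanSpace ℝ (Fin d) → ℝ)
    (hF : F = fun x => (n : ℝ)⁻¹ * ∑ i, f i x)
    (hdissim : ∀ x i, ‖gradient F x - gradient (f i) x‖ ≤ (1 / 12) * ‖gradient F x‖)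
    (x : Fin n → EuclideanSpace ℝ (Fin d))
    (xbar : EuclideanSpace ℝ (Fin d)) (hxbar : xbar = (n : ℝ)⁻¹ • ∑ i, x i)
    (δ : ℝ) (hδ : δ = τ / (τ + ‖gradient F xbar‖)) :
    (n : ℝ)⁻¹ * ∑ i, ‖(τ / (τ + ‖gradient (f i) (x i)‖)
          - τ / (τ + ‖gradient F xbar‖)) • gradient (f i) (x i)‖
      ≤ δ * L / Real.sqrt n * Real.sqrt (∑ i, ‖x i - xbar‖ ^ 2)
        + (1 / 12) * ‖gradient F xbar‖ := by
  set G := gradient F xbar with hG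
  have hb : 0 ≤ ‖G‖ := norm_nonneg _
  have hδ0 : 0 ≤ δ := by rw [hδ]; positivity
  have hδ1 : δ ≤ 1 := by rw [hδ, div_le_one (by positivity)]; linarith
  have hn' : (0 : ℝ) < n := by exact_mod_cast hn
  have key : ∀ i, ‖(τ / (τ + ‖gradient (f i) (x i)‖) - τ / (τ + ‖G‖)) • gradient (f i) (x i)‖
      ≤ δ * L * ‖x i - xbar‖ + (1 / 12) * ‖G‖ := by
    intro i
    set a := gradient (f i) (x i) with ha
    have ha0 : 0 ≤ ‖a‖ := norm_nonneg _
    have h1 : |‖G‖ - ‖a‖| ≤ L * ‖x i - xbar‖ + (1 / 12) * ‖G‖ := by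
      calc |‖G‖ - ‖a‖| ≤ ‖G - a‖ := abs_norm_sub_norm_le _ _
        _ = ‖(G - gradient (f i) xbar) + (gradient (f i) xbar - a)‖ := by
            congr 1; abel
        _ ≤ ‖G - gradient (f i) xbar‖ + ‖gradient (f i) xbar - a‖ := norm_add_le _ _
        _ ≤ (1 / 12) * ‖G‖ + L * ‖xbar - x i‖ := add_le_add (hdissim _ _) (hlip _ _ _)
        _ = _ := by rw [norm_sub_rev xbar]; ring
    have h2 : τ / (τ + ‖a‖) - τ / (τ + ‖G‖) = δ * (‖G‖ - ‖a‖) / (τ + ‖a‖) := by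
      have : τ + ‖a‖ ≠ 0 := by positivity
      have : τ + ‖G‖ ≠ 0 := by positivity
      rw [hδ]; field_simp; ring
    have h3 : ‖a‖ / (τ + ‖a‖) ≤ 1 := by
      rw [div_le_one (by positivity)]; linarith
    have h4 : 0 ≤ δ * |‖G‖ - ‖a‖| := by positivity
    rw [norm_smul, h2, Real.norm_eq_abs, abs_div, abs_mul, abs_of_nonneg hδ0,
      abs_of_pos (show 0 < τ + ‖a‖ by positivity)]
    calc δ * |‖G‖ - ‖a‖| / (τ + ‖a‖) * ‖a‖ = δ * |‖G‖ - ‖a‖| * (‖a‖ / (τ + ‖a‖)) := by ring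
      _ ≤ δ * |‖G‖ - ‖a‖| := mul_le_of_le_one_right h4 h3
      _ ≤ δ * (L * ‖x i - xbar‖ + (1 / 12) * ‖G‖) := mul_le_mul_of_nonneg_left h1 hδ0
      _ ≤ _ := by nlinarith
  have cs : ∑ i, ‖x i - xbar‖ ≤ Real.sqrt n * Real.sqrt (∑ i, ‖x i - xbar‖ ^ 2) := by
    rw [← Real.sqrt_mul hn'.le]
    apply Real.le_sqrt_of_sq_le
    simpa using sq_sum_le_card_mul_sum_sq (s := Finset.univ) (f := fun i => ‖x i - xbar‖)
  have hs : Real.sqrt n * Real.sqrt n = n := Real.mul_self_sqrt hn'.le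
  have hs0 : 0 < Real.sqrt n := Real.sqrt_pos.2 hn'
  calc _ ≤ (n : ℝ)⁻¹ * ∑ i, (δ * L * ‖x i - xbar‖ + (1 / 12) * ‖G‖) := by
        gcongr with i; exact key i
    _ = (n : ℝ)⁻¹ * (δ * L * ∑ i, ‖x i - xbar‖) + (1 / 12) * ‖G‖ := by
        rw [Finset.sum_add_distrib, ← Finset.mul_sum]
        simp only [Finset.sum_const, Finset.card_univ, Fintype.card_fin, nsmul_eq_mul]
        field_simp
    _ ≤ (n : ℝ)⁻¹ * (δ * L * (Real.sqrt n * Real.sqrt (∑ i, ‖x i - xbar‖ ^ 2)))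
        + (1 / 12) * ‖G‖ := by gcongr
    _ = _ := by
        congr 1
        rw [← hs, mul_inv]
        simp only [hs]
        field_simp
end

section
/- Let (Ω, 𝔉, μ) be a probability space, let X : Ω → [0, ∞) be an integrable nonnegative random variable, and let τ > 0 and ν > 0 with E[X] ≥ ν. Then E[τ X² / (τ + X)] ≥ τ (E[X])² / (τ + E[X]) ≥ (τ ν / (τ + ν)) · E[X]. In particular, if τ = ν, then E[τ X² / (τ + X)] ≥ (ν/2) E[X]. -/
open MeasureTheory

/-- Jensen bound for the clipped second moment.
Let `X ≥ 0` be an integrable random variable on a probability space, `τ > 0`,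
`ν > 0` and `E[X] ≥ ν`. Then
`E[τ X²/(τ + X)] ≥ τ (E[X])²/(τ + E[X]) ≥ (τν/(τ+ν)) E[X]`;
in particular if `τ = ν` then `E[τ X²/(τ + X)] ≥ (ν/2) E[X]`. -/
theorem clipped_second_moment_bound
    {Ω : Type*} [MeasurableSpace Ω] (μ : Measure Ω) [IsProbabilityMeasure μ]
    (X : Ω → ℝ) (hX : Integrable X μ) (hX0 : ∀ ω, 0 ≤ X ω)
    (τ ν : ℝ) (hτ : 0 < τ) (hν : 0 < ν) (hEX : ν ≤ ∫ ω, X ω ∂μ) :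
    (τ * (∫ ω, X ω ∂μ) ^ 2 / (τ + ∫ ω, X ω ∂μ)
        ≤ ∫ ω, τ * X ω ^ 2 / (τ + X ω) ∂μ) ∧
    (τ * ν / (τ + ν)) * (∫ ω, X ω ∂μ)
        ≤ τ * (∫ ω, X ω ∂μ) ^ 2 / (τ + ∫ ω, X ω ∂μ) ∧
    (τ = ν → (ν / 2) * (∫ ω, X ω ∂μ) ≤ ∫ ω, τ * X ω ^ 2 / (τ + X ω) ∂μ) := by
  generalize hm : ∫ ω, X ω ∂μ = m at hEX ⊢
  have hm0 : 0 < m := lt_of_lt_of_le hν hEX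
  have hint : Integrable (fun ω => τ * X ω ^ 2 / (τ + X ω)) μ := by
    refine Integrable.mono' (hX.const_mul τ) ?_ ?_
    · have h := hX.aemeasurable
      exact (AEMeasurable.div ((h.pow_const 2).const_mul τ)
        (h.const_add τ)).aestronglyMeasurable
    · refine Filter.Eventually.of_forall fun ω => ?_
      have h0 := hX0 ω
      rw [Real.norm_of_nonneg (by positivity), div_le_iff₀ (by positivity)]
      nlinarith [mul_nonneg (mul_nonneg hτ.le hτ.le) h0]
  have h1 : τ * m ^ 2 / (τ + m) ≤ ∫ ω, τ * X ω ^ 2 / (τ + X ω) ∂μ := by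
    have hlin : Integrable (fun ω => (τ - τ ^ 3 / (τ + m) ^ 2) * (X ω - m)) μ :=
      (hX.sub (integrable_const m)).const_mul _
    have key : ∫ ω, (τ * m ^ 2 / (τ + m) + (τ - τ ^ 3 / (τ + m) ^ 2) * (X ω - m)) ∂μ
        = τ * m ^ 2 / (τ + m) := by
      rw [integral_add (integrable_const _) hlin, integral_const_mul,
        integral_sub hX (integrable_const m), hm]
      simp
    rw [← key]
    refine integral_mono ((integrable_const _).add hlin) hint fun ω => ?_
    have h0 := hX0 ω
    have e : τ * X ω ^ 2 / (τ + X ω)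
        - (τ * m ^ 2 / (τ + m) + (τ - τ ^ 3 / (τ + m) ^ 2) * (X ω - m))
        = τ ^ 3 * (X ω - m) ^ 2 / ((τ + X ω) * (τ + m) ^ 2) := by
      have : τ + X ω ≠ 0 := by positivity
      have : τ + m ≠ 0 := by positivity
      field_simp
      ring
    have : 0 ≤ τ ^ 3 * (X ω - m) ^ 2 / ((τ + X ω) * (τ + m) ^ 2) := by positivity
    change τ * m ^ 2 / (τ + m) + (τ - τ ^ 3 / (τ + m) ^ 2) * (X ω - m)
      ≤ τ * X ω ^ 2 / (τ + X ω)
    linarith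
  have h2 : τ * ν / (τ + ν) * m ≤ τ * m ^ 2 / (τ + m) := by
    rw [div_mul_eq_mul_div, div_le_div_iff₀ (by positivity) (by positivity)]
    have : 0 ≤ τ ^ 2 * m * (m - ν) := mul_nonneg (by positivity) (by linarith)
    nlinarith
  refine ⟨h1, h2, fun h => le_trans (le_of_eq ?_) (h2.trans h1)⟩
  subst h
  field_simp
  ring
end

section
/- Let m ∈ ℕ, let G ∈ ℝ^{m×m} have nonnegative entries, and suppose I_m − G is invertible with (I_m − G)^{-1} having nonnegative entries. Let e, b : ℕ → ℝ^m be sequences of vectors with nonnegative entries such that e(0) = 0 and e(t+1) ≤ G e(t) + b(t) entrywise for all t ≥ 0. Then for every T ≥ 1, Σ_{t=1}^T e(t) ≤ (I_m − G)^{-1} Σ_{t=0}^{T−1} b(t) entrywise. -/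
open Matrix Finset

/-- Summing a linear-system recursion.
Let `G ∈ ℝ^{m×m}` have nonnegative entries, with `I − G` invertible and
`(I − G)⁻¹` entrywise nonnegative. If `e, b : ℕ → ℝ^m` are entrywise
nonnegative, `e(0) = 0` and `e(t+1) ≤ G e(t) + b(t)` entrywise, then for every
`T ≥ 1`, `Σ_{t=1}^T e(t) ≤ (I − G)⁻¹ Σ_{t=0}^{T−1} b(t)` entrywise. -/
theorem linear_system_sum_bound {m : ℕ}
    (G : Matrix (Fin m) (Fin m) ℝ)
    (hG : ∀ i j, 0 ≤ G i j)
    (hunit : IsUnit (1 - G).det)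
    (hinv : ∀ i j, 0 ≤ (1 - G)⁻¹ i j)
    (e b : ℕ → Fin m → ℝ)
    (he0 : e 0 = 0)
    (he : ∀ t i, 0 ≤ e t i) (hb : ∀ t i, 0 ≤ b t i)
    (hrec : ∀ t i, e (t + 1) i ≤ G.mulVec (e t) i + b t i)
    (T : ℕ) (hT : 1 ≤ T) :
    ∀ i, ∑ t ∈ Finset.Icc 1 T, e t i
      ≤ (1 - G)⁻¹.mulVec (∑ t ∈ Finset.range T, b t) i := by
  intro i
  have key : ∀ N j, (1 - G).mulVec (∑ t ∈ Finset.range N, e (t + 1)) j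
      ≤ (∑ t ∈ Finset.range N, b t) j - G.mulVec (e N) j := by
    intro N
    induction N with
    | zero => intro j; simp [he0]
    | succ n ih =>
      intro j
      have h1 := ih j
      have h2 := hrec n j
      rw [Finset.sum_range_succ, Finset.sum_range_succ, Matrix.mulVec_add,
        Pi.add_apply, Pi.add_apply]
      have h3 : (1 - G).mulVec (e (n + 1)) j = e (n + 1) j - G.mulVec (e (n + 1)) j := by
        rw [Matrix.sub_mulVec, Matrix.one_mulVec, Pi.sub_apply]
      linarith
  have hle : ∀ j, (1 - G).mulVec (∑ t ∈ Finset.range T, e (t + 1)) j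
      ≤ (∑ t ∈ Finset.range T, b t) j := by
    intro j
    have h1 := key T j
    have h2 : 0 ≤ G.mulVec (e T) j :=
      dotProduct_nonneg_of_nonneg (hG j) (he T)
    linarith
  have hS : ∑ t ∈ Finset.Icc 1 T, e t i = (∑ t ∈ Finset.range T, e (t + 1)) i := by
    rw [Finset.sum_apply, Finset.range_eq_Ico, Finset.sum_Ico_add' (fun t => e t i) 0 T 1]
    rfl
  have hid : (1 - G)⁻¹.mulVec ((1 - G).mulVec (∑ t ∈ Finset.range T, e (t + 1)))
      = ∑ t ∈ Finset.range T, e (t + 1) := by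
    rw [Matrix.mulVec_mulVec, Matrix.nonsing_inv_mul _ hunit, Matrix.one_mulVec]
  rw [hS, ← hid]
  exact dotProduct_le_dotProduct_of_nonneg_left hle (hinv i)
end
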